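/- Fix g = 4π ∑_{j=1}^{k₁} m_j δ_{p_j} and h = 4π ∑_{j=1}^{k₂} n_j δ_{q_j} with m_j, n_j ∈ ℕ. There exist constants N(g,h) and λ(g,h) such that whenever n ≥ N(g,h) or λ ≥ λ(g,h), the topological solution of the system Δu = λ e^v (e^u − 1) + g, Δv = λ e^u (e^v − 1) + h on ℤⁿ is unique: any two topological solutions (u₁, v₁) and (u₂, v₂) satisfy u₁ = u₂ and v₁ = v₂. -/

import Mathlib

/-!
Write `F = λ eᵛ (1 - eᵘ)`, so that the first equation reads `Δu = g - F`. The maximum principle gives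
`u, v ≤ 0`, hence `F ≥ 0`. The theorem rests on three facts.

* If all components of two solutions take values in `[-1/4, 0]`, the solutions agree
  (`unique_of_small`): the linearised system is then diagonally dominant, and the maximum principle
  applies at a point where `max |u₁ - u₂| |v₁ - v₂|` is largest.
* Large dimension (`lower_of_dim`): for `n ≥ 8` the function `1 / (n (1 + |x|²))` is superharmonic
  with Laplacian at most `-1` at the origin (`lapl_barrier`), so superposing its translates gives a
  barrier of size `4π ∑ mⱼ / n`, and `-u` lies below it.
* Large `λ` (`lower_of_lam`): summing the equation over the sets `{-u > δ}` gives `F ≤ ∑ g`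
  pointwise (`source_le`), so `eᵛ (1 - eᵘ)` and `eᵘ (1 - eᵛ)` are `O(1/λ)`. At each
  point therefore either `u ≥ -1/4` or `eᵘ = O(1/λ)`. If the second case occurred, there
  would be a point with `u ≥ -1/4` adjacent to one where `u` is hugely negative, which makes
  `Δu` more negative than the bound `F ≤ ∑ g` permits.
-/

open Filter Real

noncomputable section

namespace CS

abbrev Lat (n : ℕ) := Fin n → ℤ

/-- d(x) = ∑ᵢ |xᵢ|, the graph distance to the origin on ℤⁿ. -/
def latDist {n : ℕ} (x : Lat n) : ℕ := ∑ i, (x i).natAbs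

/-- x ~ y iff ∑ᵢ |xᵢ − yᵢ| = 1. -/
def adjacent {n : ℕ} (x y : Lat n) : Prop := (∑ i, (x i - y i).natAbs) = 1

instance {n : ℕ} (x y : Lat n) : Decidable (adjacent x y) :=
  decidable_of_iff ((∑ i, (x i - y i).natAbs) = 1) Iff.rfl

def unitVec {n : ℕ} (i : Fin n) : Lat n := fun j => if j = i then 1 else 0

/-- The graph Laplacian Δu(x) = ∑_{y ~ x} (u(y) − u(x)) on ℤⁿ. -/
def lapl {n : ℕ} (u : Lat n → ℝ) (x : Lat n) : ℝ :=
  ∑ i, (u (x + unitVec i) + u (x - unitVec i) - 2 * u x)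

/-- The filter of neighborhoods of infinity (d(x) → +∞) on ℤⁿ. -/
def atInfty (n : ℕ) : Filter (Lat n) := Filter.comap latDist Filter.atTop

/-- The Dirac mass at p. -/
def dirac {n : ℕ} (p x : Lat n) : ℝ := if x = p then 1 else 0

/-- (u,v) is a topological solution of Δu = λ eᵛ(eᵘ−1) + g, Δv = λ eᵘ(eᵛ−1) + h
with u, v → 0 at infinity. -/
def IsTopSol {n : ℕ} (lam : ℝ) (g h u v : Lat n → ℝ) : Prop :=
  (∀ x, lapl u x = lam * Real.exp (v x) * (Real.exp (u x) - 1) + g x) ∧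
  (∀ x, lapl v x = lam * Real.exp (u x) * (Real.exp (v x) - 1) + h x) ∧
  Filter.Tendsto u (atInfty n) (nhds 0) ∧
  Filter.Tendsto v (atInfty n) (nhds 0)

/-! ### Laplacian and maximum principle -/

lemma cofinite_le_atInfty (n : ℕ) : Filter.cofinite ≤ atInfty n := by
  rw [atInfty, ← Filter.tendsto_iff_comap, ← Nat.cofinite_eq_atTop]
  apply Filter.Tendsto.cofinite_of_finite_preimage_singleton
  intro R
  apply (Set.finite_Icc (fun _ : Fin n => -(R : ℤ)) (fun _ => (R : ℤ))).subset
  intro x hx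
  have hx' : latDist x = R := hx
  have key : ∀ i, (x i).natAbs ≤ R := fun i => by
    rw [← hx']
    exact Finset.single_le_sum (f := fun i => (x i).natAbs) (fun _ _ => Nat.zero_le _)
      (Finset.mem_univ i)
  constructor
  · intro i
    have := key i
    change -(R : ℤ) ≤ x i
    omega
  · intro i
    have := key i
    change x i ≤ (R : ℤ)
    omega

lemma lapl_nonneg_of_min {n : ℕ} {f : Lat n → ℝ} {x : Lat n} (hx : ∀ y, f x ≤ f y) :
    0 ≤ lapl f x := by
  apply Finset.sum_nonneg
  intro i _
  linarith [hx (x + unitVec i), hx (x - unitVec i)]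

lemma lapl_add {n : ℕ} (f g : Lat n → ℝ) (x : Lat n) :
    lapl (fun y => f y + g y) x = lapl f x + lapl g x := by
  simp only [lapl, ← Finset.sum_add_distrib]
  exact Finset.sum_congr rfl fun i _ => by ring

lemma lapl_const_mul {n : ℕ} (c : ℝ) (f : Lat n → ℝ) (x : Lat n) :
    lapl (fun y => c * f y) x = c * lapl f x := by
  simp only [lapl, Finset.mul_sum]
  exact Finset.sum_congr rfl fun i _ => by ring

lemma lapl_neg {n : ℕ} (f : Lat n → ℝ) (x : Lat n) :
    lapl (fun y => - f y) x = - lapl f x := by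
  simp only [lapl, ← Finset.sum_neg_distrib]
  exact Finset.sum_congr rfl fun i _ => by ring

lemma lapl_sub {n : ℕ} (f g : Lat n → ℝ) (x : Lat n) :
    lapl (fun y => f y - g y) x = lapl f x - lapl g x := by
  simp only [lapl, ← Finset.sum_sub_distrib]
  exact Finset.sum_congr rfl fun i _ => by ring

lemma lapl_sum {n k : ℕ} (f : Fin k → Lat n → ℝ) (x : Lat n) :
    lapl (fun y => ∑ j, f j y) x = ∑ j, lapl (f j) x := by
  simp only [lapl]
  rw [Finset.sum_comm]
  refine Finset.sum_congr rfl fun i _ => ?_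
  rw [Finset.sum_sub_distrib, Finset.sum_add_distrib, Finset.mul_sum]

lemma lapl_shift {n : ℕ} (f : Lat n → ℝ) (p x : Lat n) :
    lapl (fun y => f (y - p)) x = lapl f (x - p) := by
  simp only [lapl]
  refine Finset.sum_congr rfl fun i _ => ?_
  rw [show x + unitVec i - p = x - p + unitVec i by abel,
    show x - unitVec i - p = x - p - unitVec i by abel]

/-- A function with finite sublevel set `{f ≤ f x₀}` attains its minimum. -/
lemma exists_min {n : ℕ} {f : Lat n → ℝ} (x₀ : Lat n) (hf : {x | f x ≤ f x₀}.Finite) :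
    ∃ x₁, f x₁ ≤ f x₀ ∧ ∀ y, f x₁ ≤ f y := by
  obtain ⟨x₁, h₁, h₂⟩ := Set.exists_min_image _ f hf ⟨x₀, le_refl (f x₀)⟩
  refine ⟨x₁, h₁, fun y => ?_⟩
  by_cases hy : f y ≤ f x₀
  · exact h₂ y hy
  · exact le_trans h₁ (not_le.1 hy).le

lemma finite_le_of_neg {n : ℕ} {u : Lat n → ℝ} (hu : Tendsto u Filter.cofinite (nhds 0))
    {c : ℝ} (hc : c < 0) : {x | u x ≤ c}.Finite := by
  have h := hu.eventually (lt_mem_nhds hc)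
  rw [Filter.eventually_cofinite] at h
  simpa only [not_lt] using h

/-- Comparison with a nonnegative barrier `W` satisfying `ΔW ≤ -g`. -/
lemma neg_barrier_le {n : ℕ} {u W g : Lat n → ℝ} (hu : Tendsto u Filter.cofinite (nhds 0))
    (hW : ∀ x, 0 ≤ W x) (hWl : ∀ x, lapl W x ≤ - g x)
    (hul : ∀ x, u x < 0 → lapl u x < g x) (x : Lat n) : - W x ≤ u x := by
  by_contra hx
  have hx' : u x + W x < 0 := by linarith [not_le.1 hx]
  obtain ⟨x₁, h₁, h₂⟩ := exists_min (f := fun y => u y + W y) x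
    ((finite_le_of_neg hu hx').subset fun y hy => by
      have hy' : u y + W y ≤ u x + W x := hy
      have := hW y
      change u y ≤ u x + W x
      linarith)
  have h₃ := lapl_nonneg_of_min (f := fun y => u y + W y) h₂
  rw [lapl_add] at h₃
  have h₄ := hul x₁ (by linarith [hW x₁])
  linarith [hWl x₁]

/-! ### Solutions with small values are unique -/

/-- Diagonal dominance of the nonlinearity for values in `[-1/4, 0]`. -/
lemma nonlin_lt {u₁ u₂ v₁ v₂ : ℝ} (hu₁ : u₁ ≤ 0) (hv₁ : v₁ ≤ 0)
    (hu₂' : -(1/4) ≤ u₂) (hv₁' : -(1/4) ≤ v₁)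
    (hpos : 0 < u₁ - u₂) (hle : |v₁ - v₂| ≤ u₁ - u₂) :
    exp v₂ * (exp u₂ - 1) < exp v₁ * (exp u₁ - 1) := by
  have hlow : ∀ t : ℝ, -(1/4) ≤ t → 3/4 ≤ exp t := fun t ht => by linarith [add_one_le_exp t]
  have a2 := hlow u₂ hu₂'
  have b1 := hlow v₁ hv₁'
  have a2' : exp u₂ ≤ 1 := exp_le_one_iff.2 (by linarith)
  -- `eᵘ¹ - eᵘ² ≥ eᵘ² (u₁ - u₂)`
  have ha : 3/4 * (u₁ - u₂) ≤ exp u₁ - exp u₂ := by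
    have h1 : exp u₁ = exp u₂ * exp (u₁ - u₂) := by rw [← exp_add]; congr 1; ring
    have h2 := add_one_le_exp (u₁ - u₂)
    rw [h1]
    nlinarith
  -- the exponential is 1-Lipschitz on nonpositive reals
  have hb : exp v₁ - exp v₂ ≤ u₁ - u₂ := by
    have h1 : exp v₂ = exp v₁ * exp (v₂ - v₁) := by rw [← exp_add]; congr 1; ring
    have h2 := add_one_le_exp (v₂ - v₁)
    have h3 : exp v₁ ≤ 1 := exp_le_one_iff.2 hv₁
    have h4 := le_abs_self (v₁ - v₂)
    rw [h1]
    nlinarith [exp_pos v₁]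
  nlinarith [mul_le_mul b1 ha (by linarith) (by linarith), mul_nonneg (sub_nonneg.2 hb)
    (sub_nonneg.2 a2')]

lemma unique_of_small {n : ℕ} {lam : ℝ} (hlam : 0 < lam) {g h u₁ v₁ u₂ v₂ : Lat n → ℝ}
    (h₁ : IsTopSol lam g h u₁ v₁) (h₂ : IsTopSol lam g h u₂ v₂)
    (hu₁ : ∀ x, u₁ x ≤ 0 ∧ -(1/4) ≤ u₁ x) (hv₁ : ∀ x, v₁ x ≤ 0 ∧ -(1/4) ≤ v₁ x)
    (hu₂ : ∀ x, u₂ x ≤ 0 ∧ -(1/4) ≤ u₂ x) (hv₂ : ∀ x, v₂ x ≤ 0 ∧ -(1/4) ≤ v₂ x) :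
    u₁ = u₂ ∧ v₁ = v₂ := by
  -- a maximum of the difference that dominates the other component is impossible
  have key : ∀ (a₁ a₂ b₁ b₂ k : Lat n → ℝ) (x : Lat n),
      (∀ x, lapl a₁ x = lam * exp (b₁ x) * (exp (a₁ x) - 1) + k x) →
      (∀ x, lapl a₂ x = lam * exp (b₂ x) * (exp (a₂ x) - 1) + k x) →
      (∀ x, a₁ x ≤ 0 ∧ -(1/4) ≤ a₁ x) → (∀ x, a₂ x ≤ 0 ∧ -(1/4) ≤ a₂ x) →
      (∀ x, b₁ x ≤ 0 ∧ -(1/4) ≤ b₁ x) → (∀ x, b₂ x ≤ 0 ∧ -(1/4) ≤ b₂ x) →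
      0 < a₁ x - a₂ x → |b₁ x - b₂ x| ≤ a₁ x - a₂ x →
      (∀ y, |a₁ y - a₂ y| ≤ a₁ x - a₂ x) → False := by
    intro a₁ a₂ b₁ b₂ k x e₁ e₂ ha₁ ha₂ hb₁ hb₂ hpos hle hmax
    have hn := lapl_nonneg_of_min (f := fun y => a₂ y - a₁ y) (x := x) fun y => by
      have := le_abs_self (a₁ y - a₂ y)
      linarith [hmax y]
    rw [lapl_sub, e₁, e₂] at hn
    have := nonlin_lt (ha₁ x).1 (hb₁ x).1 (ha₂ x).2 (hb₁ x).2 hpos hle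
    nlinarith [mul_lt_mul_of_pos_left this hlam]
  obtain ⟨eu₁, ev₁, tu₁, tv₁⟩ := h₁
  obtain ⟨eu₂, ev₂, tu₂, tv₂⟩ := h₂
  by_contra hne
  have hex : ∃ x₀, 0 < max |u₁ x₀ - u₂ x₀| |v₁ x₀ - v₂ x₀| := by
    by_contra hcon
    push Not at hcon
    refine hne ⟨funext fun x => ?_, funext fun x => ?_⟩
    · exact sub_eq_zero.1 (abs_nonpos_iff.1 ((le_max_left _ _).trans (hcon x)))
    · exact sub_eq_zero.1 (abs_nonpos_iff.1 ((le_max_right _ _).trans (hcon x)))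
  obtain ⟨x₀, hx₀⟩ := hex
  have ht : Tendsto (fun x => - max |u₁ x - u₂ x| |v₁ x - v₂ x|) Filter.cofinite (nhds 0) := by
    have := (((tu₁.sub tu₂).abs.max (tv₁.sub tv₂).abs).neg).mono_left (cofinite_le_atInfty n)
    simpa using this
  obtain ⟨x, hx₁, hx₂⟩ := exists_min x₀ (finite_le_of_neg ht (neg_neg_of_pos hx₀))
  simp only [neg_le_neg_iff] at hx₁ hx₂
  have hpos := hx₀.trans_le hx₁
  have hU : ∀ y, |u₁ y - u₂ y| ≤ max |u₁ x - u₂ x| |v₁ x - v₂ x| :=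
    fun y => (le_max_left _ _).trans (hx₂ y)
  have hV : ∀ y, |v₁ y - v₂ y| ≤ max |u₁ x - u₂ x| |v₁ x - v₂ x| :=
    fun y => (le_max_right _ _).trans (hx₂ y)
  rcases max_choice |u₁ x - u₂ x| |v₁ x - v₂ x| with hm | hm <;> rw [hm] at hpos hU hV
  · rcases abs_choice (u₁ x - u₂ x) with ha | ha
    · rw [ha] at hpos hU hV
      exact key u₁ u₂ v₁ v₂ g x eu₁ eu₂ hu₁ hu₂ hv₁ hv₂ hpos (hV x) hU
    · rw [ha, neg_sub] at hpos hU hV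
      exact key u₂ u₁ v₂ v₁ g x eu₂ eu₁ hu₂ hu₁ hv₂ hv₁ hpos
        (by rw [abs_sub_comm]; exact hV x) (fun y => by rw [abs_sub_comm]; exact hU y)
  · rcases abs_choice (v₁ x - v₂ x) with ha | ha
    · rw [ha] at hpos hU hV
      exact key v₁ v₂ u₁ u₂ h x ev₁ ev₂ hv₁ hv₂ hu₁ hu₂ hpos (hU x) hV
    · rw [ha, neg_sub] at hpos hU hV
      exact key v₂ v₁ u₂ u₁ h x ev₂ ev₁ hv₂ hv₁ hu₂ hu₁ hpos
        (by rw [abs_sub_comm]; exact hU x) (fun y => by rw [abs_sub_comm]; exact hV y)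

/-! ### Scalar equation with a nonnegative source -/

lemma nonpos_of_eq {n : ℕ} {lam : ℝ} (hlam : 0 < lam) {g u v : Lat n → ℝ}
    (hu : Tendsto u Filter.cofinite (nhds 0)) (hg : ∀ x, 0 ≤ g x)
    (he : ∀ x, lapl u x = lam * exp (v x) * (exp (u x) - 1) + g x) (x : Lat n) : u x ≤ 0 := by
  have h := neg_barrier_le (u := fun y => - u y) (W := fun _ => 0) (g := fun _ => 0)
    (by simpa using hu.neg) (fun _ => le_refl _) (fun _ => by simp [lapl])
    (fun y hy => by
      rw [lapl_neg, he]
      have h1 : 0 < exp (u y) - 1 := by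
        have := one_lt_exp_iff.2 (neg_neg_iff_pos.1 hy)
        linarith
      have := mul_pos (mul_pos hlam (exp_pos (v y))) h1
      linarith [hg y]) x
  linarith

/-! ### The barrier in large dimension -/

/-- The superharmonic function `1 / (n (1 + |x|²))`, with `|x|` the Euclidean norm. -/
def barrier {n : ℕ} (x : Lat n) : ℝ := (n : ℝ)⁻¹ * (1 + ∑ j, (x j : ℝ) ^ 2)⁻¹

lemma sq_add_unitVec {n : ℕ} (x : Lat n) (i : Fin n) :
    ∑ j, (((x + unitVec i) j : ℤ) : ℝ) ^ 2 = ∑ j, (x j : ℝ) ^ 2 + 2 * x i + 1 := by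
  have : ∀ j, (((x + unitVec i) j : ℤ) : ℝ) ^ 2
      = (x j : ℝ) ^ 2 + (if j = i then 2 * (x j : ℝ) + 1 else 0) := by
    intro j
    by_cases hj : j = i <;> simp [unitVec, hj]
    ring
  rw [Finset.sum_congr rfl fun j _ => this j, Finset.sum_add_distrib]
  simp [add_assoc]

lemma sq_sub_unitVec {n : ℕ} (x : Lat n) (i : Fin n) :
    ∑ j, (((x - unitVec i) j : ℤ) : ℝ) ^ 2 = ∑ j, (x j : ℝ) ^ 2 - 2 * x i + 1 := by
  have : ∀ j, (((x - unitVec i) j : ℤ) : ℝ) ^ 2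
      = (x j : ℝ) ^ 2 + (if j = i then -2 * (x j : ℝ) + 1 else 0) := by
    intro j
    by_cases hj : j = i <;> simp [unitVec, hj]
    ring
  rw [Finset.sum_congr rfl fun j _ => this j, Finset.sum_add_distrib]
  simp
  ring

/-- Second difference of `1/t` in one coordinate direction; the right side is affine in `a²`, so
summing it over the directions only involves `|x|²`. -/
lemma second_diff_le {t a : ℝ} (ht : 1 ≤ t) (ha : a ^ 2 ≤ t - 1) :
    (t + 1 + 2 * a)⁻¹ + (t + 1 - 2 * a)⁻¹ - 2 * t⁻¹
      ≤ 2 / (t * (t + 1) ^ 2) * (8 * a ^ 2 - (t + 1)) := by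
  have hD : (t + 1) ^ 2 ≤ 2 * ((t + 1) ^ 2 - 4 * a ^ 2) := by nlinarith [sq_nonneg (t - 3)]
  have hD0 : 0 < (t + 1) ^ 2 - 4 * a ^ 2 := by nlinarith
  have hp : 0 < t + 1 + 2 * a := by nlinarith [sq_nonneg (a + 1)]
  have hm : 0 < t + 1 - 2 * a := by nlinarith [sq_nonneg (a - 1)]
  have h0 : (t + 1 + 2 * a)⁻¹ + (t + 1 - 2 * a)⁻¹ - 2 * t⁻¹
      = 2 / t * ((4 * a ^ 2 - (t + 1)) / ((t + 1) ^ 2 - 4 * a ^ 2)) := by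
    rw [show (t + 1) ^ 2 - 4 * a ^ 2 = (t + 1 + 2 * a) * (t + 1 - 2 * a) by ring]
    field_simp
    ring
  have h1 : 2 / (t * (t + 1) ^ 2) * (8 * a ^ 2 - (t + 1))
      = 2 / t * ((8 * a ^ 2 - (t + 1)) / (t + 1) ^ 2) := by
    field_simp
  rw [h0, h1]
  apply mul_le_mul_of_nonneg_left _ (by positivity)
  rw [div_le_div_iff₀ hD0 (by positivity)]
  nlinarith [mul_nonneg (sq_nonneg a) (sub_nonneg.2 hD), mul_nonneg (sq_nonneg a)
    (by linarith : (0:ℝ) ≤ t + 1)]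

lemma lapl_barrier {n : ℕ} (hn : 8 ≤ n) (x : Lat n) :
    lapl barrier x ≤ - dirac 0 x := by
  set s : ℝ := ∑ j, (x j : ℝ) ^ 2 with hs
  have hs0 : 0 ≤ s := Finset.sum_nonneg fun _ _ => sq_nonneg _
  have hn' : (8 : ℝ) ≤ n := by exact_mod_cast hn
  have h1 : lapl barrier x ≤ (n : ℝ)⁻¹ * (2 / ((1 + s) * (1 + s + 1) ^ 2)
      * (8 * s - n * (1 + s + 1))) := by
    have h2 : 2 / ((1 + s) * (1 + s + 1) ^ 2) * (8 * s - n * (1 + s + 1))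
        = ∑ i : Fin n, 2 / ((1 + s) * (1 + s + 1) ^ 2) * (8 * (x i : ℝ) ^ 2 - (1 + s + 1)) := by
      rw [← Finset.mul_sum, Finset.sum_sub_distrib, ← Finset.mul_sum, ← hs,
        Finset.sum_const, Finset.card_univ, Fintype.card_fin, nsmul_eq_mul]
    rw [h2, Finset.mul_sum]
    apply Finset.sum_le_sum
    intro i _
    have ha : (x i : ℝ) ^ 2 ≤ (1 + s) - 1 := by
      have := Finset.single_le_sum (f := fun j => (x j : ℝ) ^ 2) (fun _ _ => sq_nonneg _)
        (Finset.mem_univ i)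
      simp only [← hs] at this
      linarith
    have h3 := second_diff_le (by linarith : 1 ≤ 1 + s) ha
    unfold barrier
    rw [sq_add_unitVec, sq_sub_unitVec, ← hs,
      show 1 + (s + 2 * (x i : ℝ) + 1) = 1 + s + 1 + 2 * x i by ring,
      show 1 + (s - 2 * (x i : ℝ) + 1) = 1 + s + 1 - 2 * x i by ring]
    have := mul_le_mul_of_nonneg_left h3 (by positivity : (0:ℝ) ≤ (n : ℝ)⁻¹)
    linarith
  refine h1.trans ?_
  by_cases hx : x = 0
  · have : s = 0 := by simp [hs, hx]
    rw [this, dirac, if_pos hx]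
    apply le_of_eq
    field_simp
    ring
  · rw [dirac, if_neg hx, neg_zero]
    apply mul_nonpos_of_nonneg_of_nonpos (by positivity)
    apply mul_nonpos_of_nonneg_of_nonpos (by positivity)
    nlinarith

lemma barrier_nonneg {n : ℕ} (x : Lat n) : 0 ≤ barrier x := by
  have : 0 ≤ ∑ j, (x j : ℝ) ^ 2 := Finset.sum_nonneg fun _ _ => sq_nonneg _
  unfold barrier
  positivity

lemma barrier_le {n : ℕ} (x : Lat n) : barrier x ≤ (n : ℝ)⁻¹ := by
  have : 0 ≤ ∑ j, (x j : ℝ) ^ 2 := Finset.sum_nonneg fun _ _ => sq_nonneg _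
  unfold barrier
  apply mul_le_of_le_one_right (by positivity)
  exact inv_le_one_of_one_le₀ (by linarith)

lemma lower_of_dim {n k : ℕ} (hn : 8 ≤ n) {lam : ℝ} (hlam : 0 < lam) (m : Fin k → ℕ)
    (p : Fin k → Lat n) {u v : Lat n → ℝ} (hu : Tendsto u Filter.cofinite (nhds 0))
    (he : ∀ x, lapl u x = lam * exp (v x) * (exp (u x) - 1)
      + 4 * π * ∑ j, (m j : ℝ) * dirac (p j) x)
    (hbig : 16 * π * ∑ j, (m j : ℝ) ≤ n) (x : Lat n) : -(1/4) ≤ u x := by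
  have h := neg_barrier_le (u := u)
    (W := fun y => 4 * π * ∑ j, (m j : ℝ) * barrier (y - p j))
    (g := fun y => 4 * π * ∑ j, (m j : ℝ) * dirac (p j) y) hu
    (fun y => mul_nonneg (by positivity) (Finset.sum_nonneg fun j _ =>
      mul_nonneg (by positivity) (barrier_nonneg _)))
    (fun y => by
      rw [lapl_const_mul, lapl_sum, ← mul_neg, ← Finset.sum_neg_distrib]
      apply mul_le_mul_of_nonneg_left _ (by positivity)
      apply Finset.sum_le_sum
      intro j _
      rw [lapl_const_mul, lapl_shift, ← mul_neg]
      apply mul_le_mul_of_nonneg_left _ (by positivity)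
      have := lapl_barrier hn (y - p j)
      simpa [dirac, sub_eq_zero] using this)
    (fun y hy => by
      rw [he]
      have h1 : exp (u y) - 1 < 0 := by linarith [exp_lt_exp.2 hy, exp_zero]
      have := mul_neg_of_pos_of_neg (mul_pos hlam (exp_pos (v y))) h1
      linarith) x
  have hW : 4 * π * ∑ j, (m j : ℝ) * barrier (x - p j) ≤ 1/4 := by
    have h1 : ∑ j, (m j : ℝ) * barrier (x - p j) ≤ (∑ j, (m j : ℝ)) * (n : ℝ)⁻¹ := by
      rw [Finset.sum_mul]
      exact Finset.sum_le_sum fun j _ =>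
        mul_le_mul_of_nonneg_left (barrier_le _) (by positivity)
    have hn0 : (0 : ℝ) < n := by exact_mod_cast (by omega : 0 < n)
    calc _ ≤ 4 * π * ((∑ j, (m j : ℝ)) * (n : ℝ)⁻¹) :=
          mul_le_mul_of_nonneg_left h1 (by positivity)
      _ = (16 * π * ∑ j, (m j : ℝ)) / (4 * n) := by field_simp; ring
      _ ≤ 1/4 := by rw [div_le_div_iff₀ (by positivity) (by norm_num)]; linarith
  linarith

/-! ### Large coupling -/

lemma hasSum_lapl {n : ℕ} {W : Lat n → ℝ} (hW : Summable W) : HasSum (lapl W) 0 := by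
  obtain ⟨s, hs⟩ := hW
  have h : ∀ i : Fin n, HasSum
      (fun x => W (x + unitVec i) + W (x - unitVec i) - 2 * W x) 0 := by
    intro i
    have h1 : HasSum (fun x => W (x + unitVec i)) s :=
      (Equiv.addRight (unitVec i)).hasSum_iff.2 hs
    have h2 : HasSum (fun x => W (x - unitVec i)) s :=
      (Equiv.subRight (unitVec i)).hasSum_iff.2 hs
    have h3 := (h1.add h2).sub (hs.mul_left 2)
    rwa [show s + s - 2 * s = 0 by ring] at h3
  have := hasSum_sum (s := Finset.univ) fun i _ => h i
  rwa [Finset.sum_const_zero] at this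

/-- If `Δu = g - F` with `F, g ≥ 0` and `u → 0`, then `F` is bounded by the total mass
of `g` wherever `u < 0`. The equation is tested against the indicator of `{-u > δ}`: the
truncation `(-u - δ)⁺` has finite support, so its Laplacian sums to zero. -/
lemma source_le {n : ℕ} {u F g : Lat n → ℝ} {S : ℝ}
    (hu : Tendsto u Filter.cofinite (nhds 0)) (hF : ∀ x, 0 ≤ F x) (hg : ∀ x, 0 ≤ g x)
    (hS : HasSum g S) (he : ∀ x, lapl u x = g x - F x) {x : Lat n} (hx : u x < 0) :
    F x ≤ S := by
  set d : ℝ := - u x / 2 with hd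
  have hd0 : 0 < d := by linarith
  set W : Lat n → ℝ := fun y => max (- u y - d) 0 with hWdef
  have hWs : Summable W := by
    apply summable_of_hasFiniteSupport
    apply (finite_le_of_neg hu (neg_neg_of_pos hd0)).subset
    intro y hy
    by_contra hy'
    have hy'' : -d < u y := not_le.1 hy'
    exact hy (max_eq_right (by linarith))
  have hW0 : ∀ y, 0 ≤ W y := fun y => le_max_right _ _
  have hW1 : ∀ y, - u y - d ≤ W y := fun y => le_max_left _ _
  have hlow : ∀ y, (if y = x then F x else 0) - g y ≤ lapl W y := by
    intro y
    by_cases hy : d < - u y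
    · have hWy : W y = - u y - d := max_eq_left (by linarith)
      have h1 : - lapl u y ≤ lapl W y := by
        rw [← lapl_neg]
        apply Finset.sum_le_sum
        intro i _
        rw [hWy]
        linarith [hW1 (y + unitVec i), hW1 (y - unitVec i)]
      rw [he] at h1
      split_ifs with hyx
      · subst hyx; linarith
      · linarith [hF y]
    · have hyx : y ≠ x := by
        rintro rfl
        apply hy
        linarith
      rw [if_neg hyx]
      have hWy : W y = 0 := max_eq_right (by linarith [not_lt.1 hy])
      have h1 : 0 ≤ lapl W y := lapl_nonneg_of_min fun z => by rw [hWy]; exact hW0 z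
      linarith [hg y]
  have := hasSum_le hlow ((hasSum_ite_eq x (F x)).sub hS) (hasSum_lapl hWs)
  linarith

lemma lower_of_lam {n : ℕ} (hn : 2 ≤ n) {lam C : ℝ} (hlam : 0 < lam)
    {g u v : Lat n → ℝ} (hu : Tendsto u Filter.cofinite (nhds 0))
    (hu0 : ∀ x, u x ≤ 0) (hg : ∀ x, 0 ≤ g x)
    (he : ∀ x, lapl u x = lam * exp (v x) * (exp (u x) - 1) + g x)
    (hFu : ∀ x, lam * exp (v x) * (1 - exp (u x)) ≤ C)
    (hFv : ∀ x, lam * exp (u x) * (1 - exp (v x)) ≤ C)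
    (hbig : 6 * C * exp (C + n) < lam) (x : Lat n) : -(1/4) ≤ u x := by
  -- off the good set, `u` is hugely negative
  have hgap : ∀ y, u y < -(1/4) → u y < -(C + n) := by
    intro y hy
    have h1 : exp (u y) ≤ 4/5 := by
      have h2 := exp_le_exp.2 hy.le
      have h3 := add_one_le_exp (1/4 : ℝ)
      have h4 : exp (-(1/4) : ℝ) * exp (1/4) = 1 := by rw [← exp_add]; simp
      nlinarith [exp_pos (-(1/4) : ℝ)]
    have hb : lam * exp (v y) ≤ 5 * C := by
      have := hFu y
      have h5 := mul_pos hlam (exp_pos (v y))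
      nlinarith
    have ha : lam * exp (u y) ≤ 6 * C := by
      have h6 := hFv y
      have h7 := mul_pos hlam (exp_pos (v y))
      nlinarith
    rw [← exp_lt_exp, exp_neg]
    have h8 : lam * exp (u y) * exp (C + n) < lam :=
      (mul_le_mul_of_nonneg_right ha (exp_pos _).le).trans_lt hbig
    rw [lt_inv_comm₀ (exp_pos _) (exp_pos _), ← one_div, lt_div_iff₀ (exp_pos _)]
    by_contra hcon
    have := mul_le_mul_of_nonneg_left (not_lt.1 hcon) hlam.le
    linarith
  by_contra hx
  have hfin : {y | u y < -(1/4)}.Finite :=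
    (finite_le_of_neg hu (by norm_num : (-(1/4) : ℝ) < 0)).subset fun y (hy : u y < _) => hy.le
  -- a bad point with largest first coordinate has a good neighbour
  let i₀ : Fin n := ⟨0, by omega⟩
  obtain ⟨y, hy, hmax⟩ := Set.exists_max_image _ (fun y : Lat n => y i₀) hfin ⟨x, not_le.1 hx⟩
  have hz : -(1/4) ≤ u (y + unitVec i₀) := by
    by_contra hcon
    have := hmax _ (not_le.1 hcon)
    simp [unitVec] at this
  have hybad := hgap y hy
  have hlap := he (y + unitVec i₀)
  have hup : lapl u (y + unitVec i₀) ≤ u y + n / 2 := by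
    have h1 : ∀ i, u (y + unitVec i₀ + unitVec i) + u (y + unitVec i₀ - unitVec i)
        - 2 * u (y + unitVec i₀) ≤ (if i = i₀ then u y else 0) + 1/2 := by
      intro i
      have h2 := hu0 (y + unitVec i₀ + unitVec i)
      split_ifs with hi
      · subst hi
        rw [add_sub_cancel_right]
        linarith
      · linarith [hu0 (y + unitVec i₀ - unitVec i)]
    have h3 := Finset.sum_le_sum fun i (_ : i ∈ Finset.univ) => h1 i
    rw [Finset.sum_add_distrib, Finset.sum_ite_eq' Finset.univ i₀, if_pos (Finset.mem_univ _),
      Finset.sum_const, Finset.card_univ, Fintype.card_fin, nsmul_eq_mul] at h3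
    unfold lapl
    linarith
  have hn0 : (0 : ℝ) ≤ n := Nat.cast_nonneg n
  linarith [hFu (y + unitVec i₀), hg (y + unitVec i₀)]

/-! ### Assembly -/

lemma hasSum_source {n k : ℕ} (m : Fin k → ℕ) (p : Fin k → Lat n) :
    HasSum (fun x => 4 * π * ∑ j, (m j : ℝ) * dirac (p j) x) (4 * π * ∑ j, (m j : ℝ)) := by
  apply HasSum.mul_left
  apply hasSum_sum
  intro j _
  have := (hasSum_ite_eq (p j) (1 : ℝ)).mul_left (m j : ℝ)
  rwa [mul_one] at this

lemma source_nonneg {n k : ℕ} (m : Fin k → ℕ) (p : Fin k → Lat n) (x : Lat n) :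
    0 ≤ 4 * π * ∑ j, (m j : ℝ) * dirac (p j) x := by
  apply mul_nonneg (by positivity)
  apply Finset.sum_nonneg
  intro j _
  apply mul_nonneg (by positivity)
  unfold dirac
  split_ifs <;> norm_num

lemma nonlin_le_mass {n : ℕ} {lam S : ℝ} (hlam : 0 < lam) {g u v : Lat n → ℝ}
    (hu : Tendsto u Filter.cofinite (nhds 0)) (hg : ∀ x, 0 ≤ g x) (hS : HasSum g S)
    (he : ∀ x, lapl u x = lam * exp (v x) * (exp (u x) - 1) + g x) (x : Lat n) :
    lam * exp (v x) * (1 - exp (u x)) ≤ S := by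
  have hu0 := nonpos_of_eq hlam hu hg he
  rcases (hu0 x).lt_or_eq with hx | hx
  · refine source_le (F := fun y => lam * exp (v y) * (1 - exp (u y))) hu (fun y => ?_) hg hS
      (fun y => ?_) hx
    · have := exp_le_one_iff.2 (hu0 y)
      exact mul_nonneg (mul_pos hlam (exp_pos _)).le (by linarith)
    · rw [he]; ring
  · rw [hx]
    simpa using hS.nonneg hg

/-- The threshold dimension, where `4πM` is the combined total mass of the two sources. -/
def dimThreshold (M : ℝ) : ℕ := max 8 ⌈16 * π * M⌉₊

/-- Every topological solution takes values in `[-1/4, 0]` once `n` or `λ` is large. -/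
lemma small_of_large {k₁ k₂ : ℕ} (m : Fin k₁ → ℕ) (nn : Fin k₂ → ℕ) {M : ℝ}
    (hM : M = ∑ j, (m j : ℝ) + ∑ j, (nn j : ℝ)) {n : ℕ} (hn : 2 ≤ n)
    (p : Fin k₁ → Lat n) (q : Fin k₂ → Lat n) {lam : ℝ} (hlam : 0 < lam)
    (hlarge : dimThreshold M ≤ n ∨
      6 * (4 * π * M) * exp (4 * π * M + dimThreshold M) + 1 ≤ lam)
    {u v : Lat n → ℝ}
    (hsol : IsTopSol lam (fun x => 4 * π * ∑ j, (m j : ℝ) * dirac (p j) x)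
      (fun x => 4 * π * ∑ j, (nn j : ℝ) * dirac (q j) x) u v) :
    (∀ x, u x ≤ 0 ∧ -(1/4) ≤ u x) ∧ (∀ x, v x ≤ 0 ∧ -(1/4) ≤ v x) := by
  obtain ⟨eu, ev, tu, tv⟩ := hsol
  replace tu := tu.mono_left (cofinite_le_atInfty n)
  replace tv := tv.mono_left (cofinite_le_atInfty n)
  have hg := source_nonneg m p
  have hh := source_nonneg nn q
  have hu0 := nonpos_of_eq hlam tu hg eu
  have hv0 := nonpos_of_eq hlam tv hh ev
  have hm0 : 0 ≤ ∑ j, (m j : ℝ) := Finset.sum_nonneg fun _ _ => Nat.cast_nonneg _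
  have hn0 : 0 ≤ ∑ j, (nn j : ℝ) := Finset.sum_nonneg fun _ _ => Nat.cast_nonneg _
  have hM0 : 0 ≤ M := by linarith
  suffices h : (∀ x, -(1/4) ≤ u x) ∧ (∀ x, -(1/4) ≤ v x) from
    ⟨fun x => ⟨hu0 x, h.1 x⟩, fun x => ⟨hv0 x, h.2 x⟩⟩
  by_cases hN : dimThreshold M ≤ n
  · have h8 : 8 ≤ n := (le_max_left _ _).trans hN
    have hc : 16 * π * M ≤ n :=
      (Nat.le_ceil _).trans (by exact_mod_cast (le_max_right _ _).trans hN)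
    refine ⟨lower_of_dim h8 hlam m p tu eu (le_trans ?_ hc),
      lower_of_dim h8 hlam nn q tv ev (le_trans ?_ hc)⟩
    · exact mul_le_mul_of_nonneg_left (by linarith) (by positivity)
    · exact mul_le_mul_of_nonneg_left (by linarith) (by positivity)
  · have hL := hlarge.resolve_left hN
    have hnN : (n : ℝ) ≤ dimThreshold M := by exact_mod_cast (not_le.1 hN).le
    have hbig : 6 * (4 * π * M) * exp (4 * π * M + n) < lam := by
      have h1 : exp (4 * π * M + n) ≤ exp (4 * π * M + dimThreshold M) :=
        exp_le_exp.2 (by linarith)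
      have h2 := mul_le_mul_of_nonneg_left h1 (by positivity : 0 ≤ 6 * (4 * π * M))
      linarith
    have hSm : 4 * π * ∑ j, (m j : ℝ) ≤ 4 * π * M :=
      mul_le_mul_of_nonneg_left (by linarith) (by positivity)
    have hSn : 4 * π * ∑ j, (nn j : ℝ) ≤ 4 * π * M :=
      mul_le_mul_of_nonneg_left (by linarith) (by positivity)
    have hFu := fun x => (nonlin_le_mass hlam tu hg (hasSum_source m p) eu x).trans hSm
    have hFv := fun x => (nonlin_le_mass hlam tv hh (hasSum_source nn q) ev x).trans hSn
    exact ⟨lower_of_lam hn hlam tu hu0 hg eu hFu hFv hbig,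
      lower_of_lam hn hlam tv hv0 hh ev hFv hFu hbig⟩

/-- uniqueness of the topological solution whenever the dimension
n or the parameter λ is large enough, with thresholds N(g,h), λ(g,h) depending
only on the data (mⱼ), (nⱼ) of g and h. -/
theorem uniqueness_topological_solution
    {k₁ k₂ : ℕ} (m : Fin k₁ → ℕ) (nn : Fin k₂ → ℕ) :
    ∃ (N : ℕ) (Λ : ℝ), ∀ n : ℕ, 2 ≤ n →
      ∀ (p : Fin k₁ → Lat n) (q : Fin k₂ → Lat n) (lam : ℝ), 0 < lam →
        (N ≤ n ∨ Λ ≤ lam) →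
        ∀ u₁ v₁ u₂ v₂ : Lat n → ℝ,
          IsTopSol lam (fun x => 4 * Real.pi * ∑ j, (m j : ℝ) * dirac (p j) x)
            (fun x => 4 * Real.pi * ∑ j, (nn j : ℝ) * dirac (q j) x) u₁ v₁ →
          IsTopSol lam (fun x => 4 * Real.pi * ∑ j, (m j : ℝ) * dirac (p j) x)
            (fun x => 4 * Real.pi * ∑ j, (nn j : ℝ) * dirac (q j) x) u₂ v₂ →
          u₁ = u₂ ∧ v₁ = v₂ := by
  refine ⟨dimThreshold (∑ j, (m j : ℝ) + ∑ j, (nn j : ℝ)),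
    6 * (4 * π * (∑ j, (m j : ℝ) + ∑ j, (nn j : ℝ))) *
      exp (4 * π * (∑ j, (m j : ℝ) + ∑ j, (nn j : ℝ))
        + dimThreshold (∑ j, (m j : ℝ) + ∑ j, (nn j : ℝ))) + 1, ?_⟩
  intro n hn p q lam hlam hlarge u₁ v₁ u₂ v₂ h₁ h₂
  obtain ⟨a₁, b₁⟩ := small_of_large m nn rfl hn p q hlam hlarge h₁
  obtain ⟨a₂, b₂⟩ := small_of_large m nn rfl hn p q hlam hlarge h₂
  exact unique_of_small hlam h₁ h₂ a₁ b₁ a₂ b₂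

end CS
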